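/- Let R > 1, δ = R^{-m(m+n)²}, τ = m/(m+n), and let A be an m×n matrix over ℒ. Suppose that for every i ∈ ℕ there is no q ∈ 𝔽[X]^{m+n} satisfying both 0 < max_{1≤l≤m} ‖q_l‖ < δ R^{n(τ+i)} and max_{1≤l'≤n} ‖q·C_{l'}(Ā)‖ < δ R^{-m(τ+i)-n}. Then for every K ∈ (0, δ^{m+n} R^{-n²-mn}) and every q ∈ 𝔽[X]^{m+n} whose first m coordinates are not all zero, (max_{1≤l'≤n} ‖q·C_{l'}(Ā)‖)ⁿ > K / (max_{1≤l≤m} ‖q_l‖)^m; in particular A ∈ 𝔅(m,n). -/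

import Mathlib

/-!
Common setup: the field `ℒ = 𝔽((X⁻¹))` of formal Laurent series with coefficients
in a finite field `𝔽` of `k` elements.  We realize `ℒ` as `LaurentSeries 𝔽`
(Hahn series over `ℤ`) in the variable `T = X⁻¹`, so that `X` corresponds to `T⁻¹`
and the polynomial ring `𝔽[X]` corresponds to series supported on nonpositive
exponents.  The absolute value of `x = Σ_{i ≤ N} a_i X^i` (with `a_N ≠ 0`) is
`k^N`, i.e. `k^(-order x)` in terms of the `T`-adic order.
-/

open scoped Classical ENNReal NNReal
open MeasureTheory

noncomputable section

namespace FSBad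

/-- The field `ℒ = 𝔽((X⁻¹))`. -/
abbrev L (𝔽 : Type) [Field 𝔽] : Type := LaurentSeries 𝔽

variable {𝔽 : Type} [Field 𝔽] [Fintype 𝔽]

/-- The absolute value `‖·‖` on `ℒ`: `‖x‖ = k^(deg_X x)`, `‖0‖ = 0`. -/
def lnorm (x : L 𝔽) : ℝ := if x = 0 then 0 else (Fintype.card 𝔽 : ℝ) ^ (-x.order)

/-- Membership in the polynomial ring `𝔽[X] ⊆ ℒ` (polynomials in `X = T⁻¹`). -/
def IsPoly (x : L 𝔽) : Prop := ∀ i : ℤ, 0 < i → x.coeff i = 0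

/-- The height (sup-norm) `‖·‖_∞` on `ℒ^ι`. -/
def vnorm {ι : Type*} (x : ι → L 𝔽) : ℝ := ⨆ i, lnorm (x i)

/-- The closed ball in `ℒ^ι` with centre `c` and radius `ρ`. -/
def vball {ι : Type*} (c : ι → L 𝔽) (ρ : ℝ) : Set (ι → L 𝔽) :=
  {x | vnorm (fun i => x i - c i) ≤ ρ}

/-- `m × n` matrices over `ℒ`, identified with `ℒ^(mn)`. -/
abbrev Mat (𝔽 : Type) [Field 𝔽] (m n : ℕ) : Type := Matrix (Fin m) (Fin n) (L 𝔽)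

/-- The height of a matrix, i.e. the sup-norm on `ℒ^(mn)`. -/
def mnorm {m n : ℕ} (A : Mat 𝔽 m n) : ℝ := ⨆ p : Fin m × Fin n, lnorm (A p.1 p.2)

/-- The closed ball in `ℒ^(mn)` with centre `c` and radius `ρ`. -/
def mball {m n : ℕ} (c : Mat 𝔽 m n) (ρ : ℝ) : Set (Mat 𝔽 m n) :=
  {A | mnorm (A - c) ≤ ρ}

/-- The distance `⟨x⟩` from `x ∈ ℒ^h` to the polynomial lattice `𝔽[X]^h`. -/
def latDist {h : ℕ} (x : Fin h → L 𝔽) : ℝ :=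
  sInf {r : ℝ | ∃ p : Fin h → L 𝔽, (∀ i, IsPoly (p i)) ∧ r = vnorm (fun i => x i - p i)}

/-- The set `𝔅(m,n)` of badly approximable systems of `m` linear forms in `n`
variables over `ℒ`. -/
def Bad (𝔽 : Type) [Field 𝔽] [Fintype 𝔽] (m n : ℕ) : Set (Mat 𝔽 m n) :=
  {A | ∃ K : ℝ, 0 < K ∧ ∀ q : Fin m → L 𝔽, (∀ i, IsPoly (q i)) → q ≠ 0 →
    latDist (Matrix.vecMul q A) ^ n > K / vnorm q ^ m}

/-- The Hausdorff `s`-measure of `E ⊆ ℒ^(mn)`, defined through countable covers by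
balls of radii `< δ`, letting `δ → 0` (the infimum over `δ`-covers is nonincreasing
in `δ`, so the limit is the supremum over `δ > 0`). -/
def hMeasure {m n : ℕ} (s : ℝ) (E : Set (Mat 𝔽 m n)) : ℝ≥0∞ :=
  ⨆ (δ : ℝ) (_ : 0 < δ),
    ⨅ (c : ℕ → Mat 𝔽 m n) (ρ : ℕ → ℝ) (_ : ∀ i, 0 < ρ i ∧ ρ i < δ)
      (_ : E ⊆ ⋃ i, mball (c i) (ρ i)), ∑' i, ENNReal.ofReal (ρ i ^ s)

/-- The Hausdorff dimension of `E ⊆ ℒ^(mn)`. -/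
def hdim {m n : ℕ} (E : Set (Mat 𝔽 m n)) : ℝ :=
  sInf {s : ℝ | 0 ≤ s ∧ hMeasure s E = 0}

/-! ### Schmidt `(α,β)`-games on `ℒ^(mn)` -/

/-- A formal ball: an element of `Ω = ℒ^(mn) × ℝ`. -/
structure FBall (𝔽 : Type) [Field 𝔽] (m n : ℕ) where
  /-- centre -/
  c : Mat 𝔽 m n
  /-- radius -/
  r : ℝ

/-- Formal inclusion of formal balls: `(c₁,ρ₁) ⊆ (c₂,ρ₂)` iff `ρ₁ + ‖c₁ - c₂‖_∞ ≤ ρ₂`. -/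
def FBall.ssub {m n : ℕ} (B₁ B₂ : FBall 𝔽 m n) : Prop :=
  B₁.r + mnorm (B₁.c - B₂.c) ≤ B₂.r

/-- The subset of `ℒ^(mn)` determined by a formal ball. -/
def FBall.toSet {m n : ℕ} (B : FBall 𝔽 m n) : Set (Mat 𝔽 m n) := mball B.c B.r

/-- A strategy for White: given the balls `B₁, …, B_{i+1}` chosen by Black so far,
produce White's next ball. -/
abbrev Strategy (𝔽 : Type) [Field 𝔽] (m n : ℕ) : Type :=
  (i : ℕ) → (Fin (i + 1) → FBall 𝔽 m n) → FBall 𝔽 m n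

/-- White's move at stage `i` when following strategy `str` against Black's balls `B`. -/
def wMove {m n : ℕ} (str : Strategy 𝔽 m n) (B : ℕ → FBall 𝔽 m n) (i : ℕ) : FBall 𝔽 m n :=
  str i fun j => B j.1

/-- Black's move `B_{j+2}` is legal (for parameter `β`): it is a formal subset of
White's ball `W_{j+1}` and has radius `β · ρ(W_{j+1})`. -/
def BlackOk {m n : ℕ} (β : ℝ) (str : Strategy 𝔽 m n) (B : ℕ → FBall 𝔽 m n) (j : ℕ) : Prop :=
  (B (j + 1)).ssub (wMove str B j) ∧ (B (j + 1)).r = β * (wMove str B j).r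

/-- White's move `W_{i+1}` is legal (for parameter `α`): it is a formal subset of
Black's ball `B_{i+1}` and has radius `α · ρ(B_{i+1})`. -/
def WhiteOk {m n : ℕ} (α : ℝ) (str : Strategy 𝔽 m n) (B : ℕ → FBall 𝔽 m n) (i : ℕ) : Prop :=
  (wMove str B i).ssub (B i) ∧ (wMove str B i).r = α * (B i).r

/-- `str` is a winning strategy for White in the `(α,β;S)`-game: against any
sequence of Black balls, White's moves are legal as long as Black has played
legally so far, and if the whole play is legal then the intersection of the
chosen balls is contained in `S`. -/
def WinningStrategy {m n : ℕ} (α β : ℝ) (S : Set (Mat 𝔽 m n)) (str : Strategy 𝔽 m n) : Prop :=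
  ∀ B : ℕ → FBall 𝔽 m n, 0 ≤ (B 0).r →
    (∀ i, (∀ j < i, BlackOk β str B j) → WhiteOk α str B i) ∧
    ((∀ j, BlackOk β str B j) → (⋂ i, (B i).toSet) ⊆ S)

/-- `S` is `(α,β)`-winning. -/
def IsWinningAB {m n : ℕ} (α β : ℝ) (S : Set (Mat 𝔽 m n)) : Prop :=
  ∃ str : Strategy 𝔽 m n, WinningStrategy α β S str

/-- `S` is `α`-winning. -/
def IsWinningA {m n : ℕ} (α : ℝ) (S : Set (Mat 𝔽 m n)) : Prop :=
  ∀ β : ℝ, 0 < β → β < 1 → IsWinningAB α β S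

/-- The winning dimension of `S` (a supremum of a set of reals, which is `0` by
convention when the set is empty). -/
def windim {m n : ℕ} (S : Set (Mat 𝔽 m n)) : ℝ :=
  sSup {α : ℝ | 0 < α ∧ α < 1 ∧ IsWinningA α S}

/-! ### The matrices `Ā`, `Ā^*` and the quantities `M_v`, `D_v`, `∇D_v` -/

/-- `Ā = [[A, I_m], [I_n, 0]]`. Rows are indexed by `Fin m ⊕ Fin n`
(coordinates `q_1, …, q_{m+n}`), columns by `Fin n ⊕ Fin m`. -/
def Abar {m n : ℕ} (A : Mat 𝔽 m n) : Matrix (Fin m ⊕ Fin n) (Fin n ⊕ Fin m) (L 𝔽) :=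
  Matrix.fromBlocks A 1 1 0

/-- `Ā^* = [[Aᵀ, I_n], [I_m, 0]]`. Rows are indexed by `Fin n ⊕ Fin m`,
columns by `Fin m ⊕ Fin n`. -/
def AbarStar {m n : ℕ} (A : Mat 𝔽 m n) : Matrix (Fin n ⊕ Fin m) (Fin m ⊕ Fin n) (L 𝔽) :=
  Matrix.fromBlocks A.transpose 1 1 0

/-- The standard bilinear form `x·y = Σ_i x_i y_i` on `ℒ^ι`. -/
def dotL {ι : Type*} [Fintype ι] (x y : ι → L 𝔽) : L 𝔽 := ∑ i, x i * y i

/-- Strictly increasing `v`-tuples `1 ≤ i_1 < ⋯ < i_v ≤ m`. -/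
def IncTuple (v m : ℕ) : Type := {f : Fin v → Fin m // StrictMono f}

/-- The vector `M_v(A) ∈ ℒ^(C(m,v)²)` of the determinants
`det (y_{i_r} · C_{j_s}(Ā^*))_{1 ≤ r,s ≤ v}` over all strictly increasing index
tuples.  (For `v = 0` every coordinate is an empty determinant, i.e. `1`.) -/
def MvVec {m n : ℕ} (y : Fin m → (Fin n ⊕ Fin m → L 𝔽)) (v : ℕ) (A : Mat 𝔽 m n) :
    IncTuple v m × IncTuple v m → L 𝔽 := fun p =>
  Matrix.det (Matrix.of fun r s : Fin v =>
    dotL (y (p.1.1 r)) fun t => AbarStar A t (Sum.inl (p.2.1 s)))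

/-- `‖M_v(A)‖_∞`. -/
def MvNorm {m n : ℕ} (y : Fin m → (Fin n ⊕ Fin m → L 𝔽)) (v : ℕ) (A : Mat 𝔽 m n) : ℝ :=
  vnorm (MvVec y v A)

/-- `M_v(K) = max_{A ∈ K} ‖M_v(A)‖_∞` for `K ⊆ ℒ^(mn)`. -/
def MvSet {m n : ℕ} (y : Fin m → (Fin n ⊕ Fin m → L 𝔽)) (v : ℕ) (K : Set (Mat 𝔽 m n)) : ℝ :=
  sSup {r : ℝ | ∃ A ∈ K, r = MvNorm y v A}

/-- `D_v(A) = det (y_h · C_l(Ā^*))_{1 ≤ h,l ≤ v}`. -/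
def Dv {m n : ℕ} (y : Fin m → (Fin n ⊕ Fin m → L 𝔽)) (v : ℕ) (hv : v ≤ m)
    (A : Mat 𝔽 m n) : L 𝔽 :=
  Matrix.det (Matrix.of fun h l : Fin v =>
    dotL (y (Fin.castLE hv h)) fun t => AbarStar A t (Sum.inl (Fin.castLE hv l)))

/-- The discrete gradient `∇D_v(A) ∈ ℒ^(mn)`, with coordinates
`D_v(A + E_{ij}) - D_v(A)`. -/
def gradDv {m n : ℕ} (y : Fin m → (Fin n ⊕ Fin m → L 𝔽)) (v : ℕ) (hv : v ≤ m)
    (A : Mat 𝔽 m n) : Fin m × Fin n → L 𝔽 := fun p =>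
  Dv y v hv (A + Matrix.single p.1 p.2 1) - Dv y v hv A

/-- `y_1, …, y_m ∈ ℒ^(m+n)` form an orthonormal system: `y_h · y_{h'} = δ_{h h'}`
and `‖t_1 y_1 + ⋯ + t_m y_m‖_∞ = max_h ‖t_h‖`. -/
def OrthoSystem {m n : ℕ} (y : Fin m → (Fin n ⊕ Fin m → L 𝔽)) : Prop :=
  (∀ h h', dotL (y h) (y h') = if h = h' then 1 else 0) ∧
  (∀ t : Fin m → L 𝔽, vnorm (fun r => ∑ h, t h * y h r) = ⨆ h, lnorm (t h))

/-! ### Distance functions, parallelepipeds and successive minima -/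

/-- The `j`-th successive minimum of a distance function `F` on `ℒ^N`: the infimum
of all `λ > 0` such that `{F < λ}` contains `j` linearly independent points of
`𝔽[X]^N`. -/
def succMin {N : ℕ} (F : (Fin N → L 𝔽) → ℝ) (j : ℕ) : ℝ :=
  sInf {lam : ℝ | 0 < lam ∧ ∃ v : Fin j → (Fin N → L 𝔽),
    (∀ r, ∀ i, IsPoly (v r i)) ∧ LinearIndependent (L 𝔽) v ∧ ∀ r, F (v r) < lam}

/-- The distance function `F_A(x) = max_j c_j⁻¹ ‖Σ_i x_i a_{ij}‖`. -/
def FA {N : ℕ} (A : Matrix (Fin N) (Fin N) (L 𝔽)) (c : Fin N → ℝ)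
    (x : Fin N → L 𝔽) : ℝ :=
  ⨆ j, (c j)⁻¹ * lnorm (∑ i, x i * A i j)

/-- The parallelepiped `P_A(λ) = {x ∈ ℒ^N : F_A(x) < λ}`. -/
def PA {N : ℕ} (A : Matrix (Fin N) (Fin N) (L 𝔽)) (c : Fin N → ℝ) (lam : ℝ) :
    Set (Fin N → L 𝔽) := {x | FA A c x < lam}

/-- The polar distance function `F_A^*(y) = sup_{x ≠ 0} ‖x·y‖ / F_A(x)`. -/
def FAstar {N : ℕ} (A : Matrix (Fin N) (Fin N) (L 𝔽)) (c : Fin N → ℝ)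
    (y : Fin N → L 𝔽) : ℝ :=
  ⨆ x : {x : Fin N → L 𝔽 // x ≠ 0}, lnorm (dotL x.1 y) / FA A c x.1

/-! ### Haar measure, characterized by translation invariance and normalization -/

/-- The Borel σ-algebra on `ℒ^N`, generated by the balls. -/
def vecSigma (𝔽 : Type) [Field 𝔽] [Fintype 𝔽] (N : ℕ) : MeasurableSpace (Fin N → L 𝔽) :=
  MeasurableSpace.generateFrom {s | ∃ c ρ, (0 : ℝ) < ρ ∧ s = vball c ρ}

/-- `μ` is the Haar measure on `ℒ^N`: translation invariant and normalized so that
the unit ball `I^N` has measure `1` (these properties determine it uniquely). -/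
def IsHaarVec {N : ℕ} (μ : @Measure (Fin N → L 𝔽) (vecSigma 𝔽 N)) : Prop :=
  (∀ (v : Fin N → L 𝔽) (s : Set (Fin N → L 𝔽)), μ ((fun x => x + v) ⁻¹' s) = μ s) ∧
  μ {x | ∀ i, lnorm (x i) < 1} = 1

/-- The Borel σ-algebra on `ℒ^(mn)`, generated by the balls. -/
def matSigma (𝔽 : Type) [Field 𝔽] [Fintype 𝔽] (m n : ℕ) : MeasurableSpace (Mat 𝔽 m n) :=
  MeasurableSpace.generateFrom {s | ∃ c ρ, (0 : ℝ) < ρ ∧ s = mball c ρ}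

/-- `μ` is the Haar measure on `ℒ^(mn)`: translation invariant and normalized so
that the unit ball `I^(mn)` has measure `1`. -/
def IsHaarMat {m n : ℕ} (μ : @Measure (Mat 𝔽 m n) (matSigma 𝔽 m n)) : Prop :=
  (∀ (v : Mat 𝔽 m n) (s : Set (Mat 𝔽 m n)), μ ((fun x => x + v) ⁻¹' s) = μ s) ∧
  μ {A | ∀ i j, lnorm (A i j) < 1} = 1

/-! ### The constants of Section 3 -/

/-- `τ = m/(m+n)`. -/
def tau (m n : ℕ) : ℝ := m / (m + n)

/-- `δ = R^(-m(m+n)²)`. -/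
def del (R : ℝ) (m n : ℕ) : ℝ := R ^ (-((m : ℝ) * ((m : ℝ) + n) ^ 2))

/-- `δ* = R^(-n(m+n)²)`. -/
def delStar (R : ℝ) (m n : ℕ) : ℝ := R ^ (-((n : ℝ) * ((m : ℝ) + n) ^ 2))

/-!
Write `Q = max ‖q_l‖` and `P = max ‖q·C_{l'}(Ā)‖`.  The heights `δ R^(n(τ+i))` grow
geometrically from a value at most `1 ≤ Q`, so `Q` lies between those of two consecutive
indices `j` and `j + 1`.  As `q` does not solve the system of index `j + 1`, we get
`P ≥ δ R^(-m(τ+j+1)-n)`, and in the resulting lower bound for `Pⁿ Q^m` the exponents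
`±mn(τ+j)` cancel.  For `q = (r, -p)` one has `P = ‖rA - p‖_∞`, whose infimum over `p` is
`⟨rA⟩`.
-/

lemma lnorm_nonneg (x : L 𝔽) : 0 ≤ lnorm x := by
  unfold lnorm
  split_ifs <;> positivity

lemma one_le_lnorm {x : L 𝔽} (hx : IsPoly x) (hx0 : x ≠ 0) : 1 ≤ lnorm x := by
  have horder : x.order ≤ 0 := by
    by_contra! hpos
    exact hx0 (HahnSeries.coeff_order_eq_zero.mp (hx _ hpos))
  have hcard : (1 : ℝ) ≤ Fintype.card 𝔽 := by exact_mod_cast Fintype.card_pos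
  rw [lnorm, if_neg hx0]
  exact one_le_zpow₀ hcard (neg_nonneg.mpr horder)

lemma vnorm_nonneg {ι : Type*} (x : ι → L 𝔽) : 0 ≤ vnorm x :=
  Real.iSup_nonneg fun i => lnorm_nonneg (x i)

lemma lnorm_le_vnorm {ι : Type*} [Finite ι] (x : ι → L 𝔽) (i : ι) : lnorm (x i) ≤ vnorm x :=
  le_ciSup (f := fun i => lnorm (x i)) (Set.finite_range _).bddAbove i

lemma one_le_vnorm {ι : Type*} [Finite ι] {x : ι → L 𝔽} (hx : ∀ i, IsPoly (x i))
    (hx0 : x ≠ 0) : 1 ≤ vnorm x := by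
  obtain ⟨i, hi⟩ := Function.ne_iff.mp hx0
  exact (one_le_lnorm (hx i) hi).trans (lnorm_le_vnorm x i)

lemma isPoly_zero {𝔽 : Type} [Field 𝔽] : IsPoly (0 : L 𝔽) := fun _ _ => rfl

lemma isPoly_neg {𝔽 : Type} [Field 𝔽] {x : L 𝔽} (hx : IsPoly x) : IsPoly (-x) := fun i hi => by
  rw [HahnSeries.coeff_neg, hx i hi, neg_zero]

lemma le_latDist_pow {h : ℕ} {x : Fin h → L 𝔽} {c : ℝ} {k : ℕ}
    (hc : ∀ p : Fin h → L 𝔽, (∀ i, IsPoly (p i)) → c ≤ vnorm (x - p) ^ k) :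
    c ≤ latDist x ^ k := by
  set S : Set ℝ := {r | ∃ p : Fin h → L 𝔽, (∀ i, IsPoly (p i)) ∧ r = vnorm (x - p)}
  have hne : S.Nonempty := ⟨_, 0, fun _ => isPoly_zero, rfl⟩
  have hbdd : BddBelow S := ⟨0, by rintro _ ⟨p, -, rfl⟩; exact vnorm_nonneg _⟩
  have hS : S ⊆ {r | c ≤ r ^ k} := by rintro _ ⟨p, hp, rfl⟩; exact hc p hp
  have hclosed : IsClosed {r : ℝ | c ≤ r ^ k} := isClosed_le continuous_const (continuous_pow k)
  exact closure_minimal hS hclosed (csInf_mem_closure hne hbdd)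

lemma vecMul_Abar_comp_inl {𝔽 : Type} [Field 𝔽] {m n : ℕ} (A : Mat 𝔽 m n)
    (q : Fin m ⊕ Fin n → L 𝔽) :
    Matrix.vecMul q (Abar A) ∘ Sum.inl = Matrix.vecMul (q ∘ Sum.inl) A + q ∘ Sum.inr := by
  rw [Abar, Matrix.vecMul_fromBlocks, Sum.elim_comp_inl, Matrix.vecMul_one]

lemma mem_Bad_of_forall_le {m n : ℕ} {A : Mat 𝔽 m n} {C : ℝ} (hC : 0 < C)
    (h : ∀ q : Fin m ⊕ Fin n → L 𝔽, (∀ t, IsPoly (q t)) → q ∘ Sum.inl ≠ 0 →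
      C ≤ vnorm (Matrix.vecMul q (Abar A) ∘ Sum.inl) ^ n * vnorm (q ∘ Sum.inl) ^ m) :
    A ∈ Bad 𝔽 m n := by
  refine ⟨C / 2, half_pos hC, fun q hq hq0 => ?_⟩
  have hvq : 0 < vnorm q := zero_lt_one.trans_le (one_le_vnorm hq hq0)
  have hdist (p : Fin n → L 𝔽) (hp : ∀ i, IsPoly (p i)) :
      C / vnorm q ^ m ≤ vnorm (Matrix.vecMul q A - p) ^ n := by
    have hqp := h (Sum.elim q (-p)) (Sum.forall.mpr ⟨hq, fun i => isPoly_neg (hp i)⟩) hq0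
    rw [vecMul_Abar_comp_inl, Sum.elim_comp_inl, Sum.elim_comp_inr, ← sub_eq_add_neg] at hqp
    exact (div_le_iff₀ (pow_pos hvq m)).mpr hqp
  calc C / 2 / vnorm q ^ m < C / vnorm q ^ m := by gcongr; exact half_lt_self hC
    _ ≤ latDist (Matrix.vecMul q A) ^ n := le_latDist_pow hdist

lemma exists_nat_mul_rpow_near {R δ s τ Q : ℝ} (hR : 1 < R) (hδ : 0 < δ) (hs : 0 < s)
    (hQ : δ * R ^ (s * τ) ≤ Q) :
    ∃ j : ℕ, δ * R ^ (s * (τ + j)) ≤ Q ∧ Q < δ * R ^ (s * (τ + (j + 1 : ℕ))) := by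
  have hR0 : 0 < R := zero_lt_one.trans hR
  have hpos : 0 < δ * R ^ (s * τ) := by positivity
  have hstep (j : ℕ) : δ * R ^ (s * (τ + j)) = (R ^ s) ^ j * (δ * R ^ (s * τ)) := by
    rw [mul_add, Real.rpow_add hR0, Real.rpow_mul_natCast hR0.le]
    ring
  obtain ⟨j, hle, hlt⟩ :=
    exists_nat_pow_near ((one_le_div hpos).mpr hQ) (Real.one_lt_rpow hR hs)
  rw [le_div_iff₀ hpos] at hle
  rw [div_lt_iff₀ hpos] at hlt
  exact ⟨j, (hstep j).trans_le hle, hlt.trans_eq (hstep (j + 1)).symm⟩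

lemma mul_rpow_le_pow_mul_pow {m n : ℕ} (hn : 0 < n) {R δ τ P Q : ℝ} (hR : 1 < R) (hδ : 0 < δ)
    (hQ : δ * R ^ ((n : ℝ) * τ) ≤ Q)
    (hP : ∀ i : ℕ, Q < δ * R ^ ((n : ℝ) * (τ + i)) → δ * R ^ (-(m : ℝ) * (τ + i) - n) ≤ P) :
    δ ^ (m + n) * R ^ (-((n : ℝ) ^ 2) - (m : ℝ) * n) ≤ P ^ n * Q ^ m := by
  have hR0 : 0 < R := zero_lt_one.trans hR
  obtain ⟨j, hjQ, hQj⟩ := exists_nat_mul_rpow_near hR hδ (Nat.cast_pos.mpr hn) hQ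
  have hjP := hP (j + 1) hQj
  have hP0 : 0 ≤ P := le_trans (by positivity) hjP
  calc δ ^ (m + n) * R ^ (-((n : ℝ) ^ 2) - (m : ℝ) * n)
      = (δ * R ^ (-(m : ℝ) * (τ + (j + 1 : ℕ)) - n)) ^ n *
          (δ * R ^ ((n : ℝ) * (τ + j))) ^ m := by
        rw [mul_pow, mul_pow, ← Real.rpow_mul_natCast hR0.le, ← Real.rpow_mul_natCast hR0.le,
          mul_mul_mul_comm, ← Real.rpow_add hR0, ← pow_add, add_comm n m]
        congr 2
        push_cast
        ring
    _ ≤ P ^ n * Q ^ m := by gcongr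

/-- A polynomial solution `q` of the system (14)–(15), i.e. of `0 < max_l ‖q_l‖ < H` and
`max_{l'} ‖q·C_{l'}(Ā)‖ < ε`, with the two bounds left arbitrary. -/
def IsSolution {m n : ℕ} (A : Mat 𝔽 m n) (H ε : ℝ) (q : Fin m ⊕ Fin n → L 𝔽) : Prop :=
  (∀ t, IsPoly (q t)) ∧ 0 < vnorm (q ∘ Sum.inl) ∧ vnorm (q ∘ Sum.inl) < H ∧
    vnorm (Matrix.vecMul q (Abar A) ∘ Sum.inl) < ε

lemma le_vnorm_pow_mul_vnorm_pow {m n : ℕ} (hn : 0 < n) {R δ τ : ℝ} (hR : 1 < R) (hδ : 0 < δ)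
    (hδτ : δ * R ^ ((n : ℝ) * τ) ≤ 1) {A : Mat 𝔽 m n}
    (havoid : ∀ i : ℕ, ¬ ∃ q,
      IsSolution A (δ * R ^ ((n : ℝ) * (τ + i))) (δ * R ^ (-(m : ℝ) * (τ + i) - n)) q)
    {q : Fin m ⊕ Fin n → L 𝔽} (hq : ∀ t, IsPoly (q t)) (hq0 : q ∘ Sum.inl ≠ 0) :
    δ ^ (m + n) * R ^ (-((n : ℝ) ^ 2) - (m : ℝ) * n) ≤
      vnorm (Matrix.vecMul q (Abar A) ∘ Sum.inl) ^ n * vnorm (q ∘ Sum.inl) ^ m := by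
  have hQ : 1 ≤ vnorm (q ∘ Sum.inl) := one_le_vnorm (fun l => hq (Sum.inl l)) hq0
  refine mul_rpow_le_pow_mul_pow hn hR hδ (hδτ.trans hQ) fun i hi => ?_
  by_contra! hlt
  exact havoid i ⟨q, hq, zero_lt_one.trans_le hQ, hi, hlt⟩

theorem avoid_implies_Bad_general {m n : ℕ} (hn : 0 < n) {R δ τ : ℝ} (hR : 1 < R) (hδ : 0 < δ)
    (hδτ : δ * R ^ ((n : ℝ) * τ) ≤ 1) (A : Mat 𝔽 m n)
    (havoid : ∀ i : ℕ, ¬ ∃ q,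
      IsSolution A (δ * R ^ ((n : ℝ) * (τ + i))) (δ * R ^ (-(m : ℝ) * (τ + i) - n)) q) :
    (∀ K : ℝ, K < δ ^ (m + n) * R ^ (-((n : ℝ) ^ 2) - (m : ℝ) * n) →
      ∀ q : Fin m ⊕ Fin n → L 𝔽, (∀ t, IsPoly (q t)) → q ∘ Sum.inl ≠ 0 →
        vnorm (Matrix.vecMul q (Abar A) ∘ Sum.inl) ^ n > K / vnorm (q ∘ Sum.inl) ^ m) ∧
    A ∈ Bad 𝔽 m n := by
  have hbound (q : Fin m ⊕ Fin n → L 𝔽) (hq : ∀ t, IsPoly (q t)) (hq0 : q ∘ Sum.inl ≠ 0) :=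
    le_vnorm_pow_mul_vnorm_pow hn hR hδ hδτ havoid hq hq0
  have hC : 0 < δ ^ (m + n) * R ^ (-((n : ℝ) ^ 2) - (m : ℝ) * n) :=
    mul_pos (pow_pos hδ _) (Real.rpow_pos_of_pos (zero_lt_one.trans hR) _)
  refine ⟨fun K hK q hq hq0 => ?_, mem_Bad_of_forall_le hC hbound⟩
  have hQ : 0 < vnorm (q ∘ Sum.inl) :=
    zero_lt_one.trans_le (one_le_vnorm (fun l => hq (Sum.inl l)) hq0)
  exact (div_lt_iff₀ (pow_pos hQ m)).mpr (hK.trans_le (hbound q hq hq0))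

lemma del_pos {R : ℝ} (hR : 0 < R) (m n : ℕ) : 0 < del R m n :=
  Real.rpow_pos_of_pos hR _

lemma del_mul_rpow_tau_le_one {R : ℝ} (hR : 1 < R) {m n : ℕ} (hn : 0 < n) :
    del R m n * R ^ ((n : ℝ) * tau m n) ≤ 1 := by
  have hn1 : (1 : ℝ) ≤ n := by exact_mod_cast hn
  have hnmn : (n : ℝ) ≤ m + n := le_add_of_nonneg_left m.cast_nonneg
  have hexp : (n : ℝ) * tau m n ≤ m * ((m : ℝ) + n) ^ 2 :=
    calc (n : ℝ) * tau m n = m * (n / (m + n)) := by rw [tau]; ring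
      _ ≤ m * 1 := by gcongr; exact div_le_one_of_le₀ hnmn (by positivity)
      _ ≤ m * ((m : ℝ) + n) ^ 2 := by gcongr; exact one_le_pow₀ (hn1.trans hnmn)
  rw [del, ← Real.rpow_add (zero_lt_one.trans hR)]
  exact Real.rpow_le_one_of_one_le_of_nonpos hR.le (by linarith)

/-- **Theorem (Statement 14).** If for every `i ∈ ℕ` the system (14)–(15) has no
polynomial solutions, then for every `K ∈ (0, δ^{m+n} R^{-n²-mn})` and every
`q ∈ 𝔽[X]^{m+n}` whose first `m` coordinates are not all zero,
`(max_{l'} ‖q·C_{l'}(Ā)‖)ⁿ > K / (max_l ‖q_l‖)^m`; in particular `A ∈ 𝔅(m,n)`. -/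
theorem avoid_implies_Bad (𝔽 : Type) [Field 𝔽] [Fintype 𝔽] (m n : ℕ)
    (hm : 0 < m) (hn : 0 < n) (R : ℝ) (hR : 1 < R) (A : Mat 𝔽 m n)
    (havoid : ∀ i : ℕ, ¬ ∃ q : Fin m ⊕ Fin n → L 𝔽, (∀ t, IsPoly (q t)) ∧
      0 < (⨆ l : Fin m, lnorm (q (Sum.inl l))) ∧
      (⨆ l : Fin m, lnorm (q (Sum.inl l))) < del R m n * R ^ ((n : ℝ) * (tau m n + i)) ∧
      (⨆ l' : Fin n, lnorm (Matrix.vecMul q (Abar A) (Sum.inl l'))) <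
        del R m n * R ^ (-(m : ℝ) * (tau m n + i) - n)) :
    (∀ K : ℝ, 0 < K → K < del R m n ^ (m + n) * R ^ (-((n : ℝ) ^ 2) - (m : ℝ) * n) →
      ∀ q : Fin m ⊕ Fin n → L 𝔽, (∀ t, IsPoly (q t)) →
        (¬ ∀ l : Fin m, q (Sum.inl l) = 0) →
        (⨆ l' : Fin n, lnorm (Matrix.vecMul q (Abar A) (Sum.inl l'))) ^ n >
          K / (⨆ l : Fin m, lnorm (q (Sum.inl l))) ^ m) ∧
    A ∈ Bad 𝔽 m n := by
  obtain ⟨hbound, hBad⟩ := avoid_implies_Bad_general hn hR (del_pos (zero_lt_one.trans hR) m n)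
    (del_mul_rpow_tau_le_one hR hn) A havoid
  exact ⟨fun K _ hK q hq hq0 => hbound K hK q hq fun h => hq0 (congrFun h), hBad⟩

end FSBad
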